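/- For every real λ ≥ 0 and every f ∈ [0, 1/3], we have 2·P_λ(f) ≤ 2·P_λ'(0)·f ≤ 0.9999·f, where P_λ'(0) denotes the derivative of P_λ at 0. -/

import Mathlib

/-- The polynomial `Q_d`: the probability that a given colour "overtakes" as the
majority colour among `d` independently uniformly 3-coloured vertices, when each vertex
is independently recoloured (to a uniformly random different colour) with probability
`f`. -/
noncomputable def Q (d : ℕ) (f : ℝ) : ℝ :=
  ∑ i ∈ Finset.Icc 1 (d / 2),
    (Nat.choose d i : ℝ) * (1 / 3 : ℝ) ^ i * (2 / 3 : ℝ) ^ (d - i) *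
      ∑ j ∈ Finset.Icc (d / 2 + 1) d, ∑ k ∈ Finset.range (i + 1),
        (Nat.choose i k : ℝ) * f ^ k * (1 - f) ^ (i - k) *
          (Nat.choose (d - i) (j + k - i) : ℝ) * (f / 2) ^ (j + k - i) *
          (1 - f / 2) ^ (d - j - k)

/-- `P_λ`: the Poisson(λ) average of the polynomials `Q_d`. -/
noncomputable def P (lam : ℝ) (f : ℝ) : ℝ :=
  ∑' d : ℕ, (Real.exp (-lam) * lam ^ d / (Nat.factorial d : ℝ)) * Q d f


/-- Recursive expectation of `ψ (X_d) (Y_d)`. -/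
noncomputable def Frec (f : ℝ) : ℕ → (ℕ → ℕ → ℝ) → ℝ
  | 0, ψ => ψ 0 0
  | d + 1, ψ => (1 / 3) * (f * Frec f d (fun s t => ψ (s + 1) t)
        + (1 - f) * Frec f d (fun s t => ψ (s + 1) (t + 1)))
      + (2 / 3) * ((1 - f / 2) * Frec f d ψ + (f / 2) * Frec f d (fun s t => ψ s (t + 1)))

/-- binomial(d,1/3) weights -/
noncomputable def bw (d n : ℕ) : ℝ := (Nat.choose d n : ℝ) * (1 / 3) ^ n * (2 / 3) ^ (d - n)

lemma bw_succ (d n : ℕ) : bw (d + 1) (n + 1) = 2 / 3 * bw d (n + 1) + 1 / 3 * bw d n := by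
  unfold bw
  rw [Nat.choose_succ_succ]
  rcases lt_or_ge n d with h | h
  · obtain ⟨e, rfl⟩ : ∃ e, d = n + 1 + e := ⟨d - (n + 1), by omega⟩
    rw [show n + 1 + e + 1 - (n + 1) = e + 1 by omega, show n + 1 + e - (n + 1) = e by omega,
      show n + 1 + e - n = e + 1 by omega]
    push_cast; ring
  · rw [Nat.choose_eq_zero_of_lt (show d < n + 1 by omega),
      show d + 1 - (n + 1) = d - n by omega]
    push_cast; ring

lemma bw_zero_right (d : ℕ) : bw (d + 1) 0 = 2 / 3 * bw d 0 := by
  simp [bw, pow_succ]; ring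

lemma bw_nonneg (d n : ℕ) : 0 ≤ bw d n := by unfold bw; positivity

lemma Frec_mono {f : ℝ} (h0 : 0 ≤ f) (h1 : f ≤ 1) (d : ℕ) : ∀ (ψ φ : ℕ → ℕ → ℝ),
    (∀ s t, ψ s t ≤ φ s t) → Frec f d ψ ≤ Frec f d φ := by
  induction d with
  | zero => intro ψ φ h; exact h 0 0
  | succ d ih =>
    intro ψ φ h
    simp only [Frec]
    have : 0 ≤ 1 - f := by linarith
    have : 0 ≤ 1 - f / 2 := by linarith
    gcongr <;> (apply ih; intro s t; apply h)

lemma Frec_add (f : ℝ) (d : ℕ) : ∀ (ψ φ : ℕ → ℕ → ℝ),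
    Frec f d (fun s t => ψ s t + φ s t) = Frec f d ψ + Frec f d φ := by
  induction d with
  | zero => intro ψ φ; rfl
  | succ d ih =>
    intro ψ φ
    simp only [Frec, ih]
    ring

lemma Frec_zero (f : ℝ) (d : ℕ) : Frec f d (fun _ _ => 0) = 0 := by
  induction d with
  | zero => rfl
  | succ d ih => simp only [Frec, ih]; ring

lemma Frec_single (f : ℝ) (d : ℕ) : ∀ n : ℕ,
    Frec f d (fun _ t => if t = n then 1 else 0) = bw d n := by
  induction d with
  | zero =>
    intro n
    rcases n with _ | n <;> simp [Frec, bw]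
  | succ d ih =>
    intro n
    simp only [Frec, ih]
    rcases n with _ | n
    · simp only [Nat.add_eq_zero_iff, one_ne_zero, and_false, if_false, Frec_zero, bw_zero_right]
      ring
    · simp only [add_left_inj, ih, bw_succ]
      ring

lemma Frec_main {f : ℝ} (h0 : 0 ≤ f) (h1 : f ≤ 1) (d : ℕ) : ∀ n : ℕ,
    Frec f d (fun s t => if s ≤ n ∧ n < t then 1 else 0) ≤ (n + 1) * bw d (n + 1) * f := by
  induction d with
  | zero => intro n; simp [Frec, bw]
  | succ d ih =>
    intro n
    have h2 : 0 ≤ 1 - f := by linarith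
    have e1 : Frec f d (fun s t => if s ≤ n ∧ n < t + 1 then 1 else 0) ≤
        (n + 1) * bw d (n + 1) * f + bw d n := by
      calc _ ≤ Frec f d (fun s t => (if s ≤ n ∧ n < t then 1 else 0) + (if t = n then 1 else 0)) := by
            apply Frec_mono h0 h1
            intro s t
            split_ifs <;> first | omega | norm_num
        _ ≤ _ := by
            rw [Frec_add f d (fun s t => if s ≤ n ∧ n < t then 1 else 0)
              (fun s t => if t = n then 1 else 0), Frec_single]
            linarith [ih n]
    have e2 : Frec f d (fun s t => if s + 1 ≤ n ∧ n < t + 1 then 1 else 0) ≤ n * bw d n * f := by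
      rcases n with _ | n
      · simp [Frec_zero]
      · refine le_trans (le_of_eq ?_) ((ih n).trans (le_of_eq ?_))
        · simp
        · push_cast; ring
    have e3 : Frec f d (fun s t => if s + 1 ≤ n ∧ n < t then 1 else 0) ≤ n * bw d n * f := by
      refine le_trans (Frec_mono h0 h1 d _ _ ?_) e2
      intro s t
      split_ifs <;> first | omega | norm_num
    simp only [Frec]
    rw [bw_succ]
    have := ih n
    have h3 : 0 ≤ 1 - f / 2 := by linarith
    calc _ ≤ (1 / 3) * (f * (n * bw d n * f) + (1 - f) * (n * bw d n * f))
      + (2 / 3) * ((1 - f / 2) * ((n + 1) * bw d (n + 1) * f)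
        + (f / 2) * ((n + 1) * bw d (n + 1) * f + bw d n)) := by gcongr
      _ = _ := by ring

/-- explicit conditional expectation -/
noncomputable def V (f : ℝ) (i e : ℕ) (φ : ℕ → ℝ) : ℝ :=
  ∑ k ∈ Finset.range (i + 1), (Nat.choose i k : ℝ) * f ^ k * (1 - f) ^ (i - k) *
    ∑ m ∈ Finset.range (e + 1), (Nat.choose e m : ℝ) * (f / 2) ^ m * (1 - f / 2) ^ (e - m) *
      φ (i - k + m)

lemma pascal (d : ℕ) (x y : ℝ) (g : ℕ → ℕ → ℝ) :
    ∑ i ∈ Finset.range (d + 1 + 1), (Nat.choose (d + 1) i : ℝ) * x ^ i * y ^ (d + 1 - i) *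
      g i (d + 1 - i) =
    x * ∑ i ∈ Finset.range (d + 1), (Nat.choose d i : ℝ) * x ^ i * y ^ (d - i) *
      g (i + 1) (d - i) +
    y * ∑ i ∈ Finset.range (d + 1), (Nat.choose d i : ℝ) * x ^ i * y ^ (d - i) *
      g i (d - i + 1) := by
  have e2 : ∑ i ∈ Finset.range (d + 1), (Nat.choose d i : ℝ) * x ^ i * y ^ (d - i) *
      g i (d - i + 1) = ∑ i ∈ Finset.range (d + 1 + 1),
        (Nat.choose d i : ℝ) * x ^ i * y ^ (d - i) * g i (d - i + 1) := by
    rw [Finset.sum_range_succ _ (d + 1)]; simp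
  rw [e2, Finset.sum_range_succ', Finset.sum_range_succ' _ (d + 1), mul_add, ← add_assoc,
    Finset.mul_sum, Finset.mul_sum, ← Finset.sum_add_distrib]
  congr 1
  · apply Finset.sum_congr rfl
    intro i hi
    rw [Nat.choose_succ_succ, show d + 1 - (i + 1) = d - i by omega]
    rcases lt_or_ge i d with h | h
    · obtain ⟨e, rfl⟩ : ∃ e, d = i + 1 + e := ⟨d - (i + 1), by omega⟩
      rw [show i + 1 + e - (i + 1) = e by omega, show i + 1 + e - i = e + 1 by omega]
      push_cast; ring
    · rw [Nat.choose_eq_zero_of_lt (show d < i + 1 by omega)]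
      push_cast; ring
  · simp; ring

lemma V_succ_left (f : ℝ) (i e : ℕ) (φ : ℕ → ℝ) :
    V f (i + 1) e φ = f * V f i e φ + (1 - f) * V f i e (fun t => φ (t + 1)) := by
  unfold V
  have := pascal i f (1 - f) (fun _ r => ∑ m ∈ Finset.range (e + 1),
    (Nat.choose e m : ℝ) * (f / 2) ^ m * (1 - f / 2) ^ (e - m) * φ (r + m))
  simp only [add_right_comm _ 1 _] at this ⊢
  exact this

lemma V_succ_right (f : ℝ) (i e : ℕ) (φ : ℕ → ℝ) :
    V f i (e + 1) φ = (1 - f / 2) * V f i e φ + (f / 2) * V f i e (fun t => φ (t + 1)) := by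
  unfold V
  rw [Finset.mul_sum, Finset.mul_sum, ← Finset.sum_add_distrib]
  apply Finset.sum_congr rfl
  intro k hk
  have := pascal e (f / 2) (1 - f / 2) (fun m _ => φ (i - k + m))
  rw [this]
  simp only [← add_assoc]
  ring

lemma Frec_eq (f : ℝ) (d : ℕ) : ∀ ψ : ℕ → ℕ → ℝ, Frec f d ψ =
    ∑ i ∈ Finset.range (d + 1), (Nat.choose d i : ℝ) * (1 / 3) ^ i * (2 / 3) ^ (d - i) *
      V f i (d - i) (ψ i) := by
  induction d with
  | zero => intro ψ; simp [Frec, V]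
  | succ d ih =>
    intro ψ
    rw [pascal d (1 / 3) (2 / 3) (fun i e => V f i e (ψ i))]
    simp only [Frec, ih, V_succ_left, V_succ_right]
    simp only [Finset.mul_sum, ← Finset.sum_add_distrib]
    apply Finset.sum_congr rfl
    intro i hi
    ring

lemma inner_eq (f : ℝ) (d i n : ℕ) (hi : i ≤ n) (hd : i ≤ d) :
    ∑ j ∈ Finset.Icc (n + 1) d, ∑ k ∈ Finset.range (i + 1),
        (Nat.choose i k : ℝ) * f ^ k * (1 - f) ^ (i - k) *
          (Nat.choose (d - i) (j + k - i) : ℝ) * (f / 2) ^ (j + k - i) *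
          (1 - f / 2) ^ (d - j - k) = V f i (d - i) (fun t => if n < t then 1 else 0) := by
  rw [Finset.sum_comm]
  unfold V
  apply Finset.sum_congr rfl
  intro k hk
  rw [Finset.mem_range] at hk
  rw [Finset.mul_sum]
  refine Finset.sum_bij_ne_zero (fun j _ _ => j + k - i) ?_ ?_ ?_ ?_
  · intro j hj hne
    by_contra hc
    apply hne
    rw [Finset.mem_range] at hc
    rw [Nat.choose_eq_zero_of_lt (show d - i < j + k - i by omega)]
    simp
  · intro a ha _ b hb _ h
    rw [Finset.mem_Icc] at ha hb
    omega
  · intro m hm hne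
    rw [Finset.mem_range] at hm
    have h1 : n < i - k + m := by
      by_contra hc
      apply hne
      simp [hc]
    refine ⟨i - k + m, Finset.mem_Icc.2 ⟨h1, by omega⟩, ?_, by omega⟩
    rw [show i - k + m + k - i = m by omega, show d - (i - k + m) - k = d - i - m by omega]
    simp only [h1, if_true] at hne
    intro h0
    apply hne
    rw [← h0]; ring
  · intro j hj hne
    rw [Finset.mem_Icc] at hj
    have : n < i - k + (j + k - i) := by omega
    beta_reduce
    rw [if_pos this, show d - i - (j + k - i) = d - j - k by omega]
    ring

/-- derivative of `Q d` at zero -/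
noncomputable def qd (d : ℕ) : ℝ := if d < 2 then 0 else ((d / 2 : ℕ) + 1) * bw d (d / 2 + 1)

lemma Q_le {f : ℝ} (h0 : 0 ≤ f) (h1 : f ≤ 1) (d : ℕ) : Q d f ≤ qd d * f := by
  unfold qd
  split_ifs with h
  · have : d / 2 = 0 := by omega
    simp [Q, this]
  · refine le_trans ?_ (Frec_main h0 h1 d (d / 2))
    rw [Frec_eq]
    unfold Q
    have h2 : 0 ≤ 1 - f := by linarith
    have h3 : 0 ≤ 1 - f / 2 := by linarith
    refine le_trans (le_of_eq ?_) (Finset.sum_le_sum_of_subset_of_nonneg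
      (s := Finset.Icc 1 (d / 2)) ?_ ?_)
    · apply Finset.sum_congr rfl
      intro i hi
      rw [Finset.mem_Icc] at hi
      rw [inner_eq f d i (d / 2) hi.2 (by omega)]
      simp [hi.2]
    · intro i hi
      rw [Finset.mem_Icc] at hi
      rw [Finset.mem_range]; omega
    · intro i _ _
      unfold V
      apply mul_nonneg (by positivity)
      apply Finset.sum_nonneg
      intro k _
      apply mul_nonneg (by positivity)
      apply Finset.sum_nonneg
      intro m _
      apply mul_nonneg (by positivity)
      beta_reduce
      split_ifs <;> norm_num

/-- complex version -/
noncomputable def QC (d : ℕ) (f : ℂ) : ℂ :=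
  ∑ i ∈ Finset.Icc 1 (d / 2),
    (Nat.choose d i : ℂ) * (1 / 3 : ℂ) ^ i * (2 / 3 : ℂ) ^ (d - i) *
      ∑ j ∈ Finset.Icc (d / 2 + 1) d, ∑ k ∈ Finset.range (i + 1),
        (Nat.choose i k : ℂ) * f ^ k * (1 - f) ^ (i - k) *
          (Nat.choose (d - i) (j + k - i) : ℂ) * (f / 2) ^ (j + k - i) *
          (1 - f / 2) ^ (d - j - k)

lemma QC_ofReal (d : ℕ) (f : ℝ) : QC d (f : ℂ) = (Q d f : ℂ) := by
  unfold QC Q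
  push_cast
  rfl

/-- `QC d z / z` -/
noncomputable def gC (d : ℕ) (f : ℂ) : ℂ :=
  ∑ i ∈ Finset.Icc 1 (d / 2),
    (Nat.choose d i : ℂ) * (1 / 3 : ℂ) ^ i * (2 / 3 : ℂ) ^ (d - i) *
      ∑ j ∈ Finset.Icc (d / 2 + 1) d, ∑ k ∈ Finset.range (i + 1),
        (Nat.choose i k : ℂ) * f ^ k * (1 - f) ^ (i - k) *
          (Nat.choose (d - i) (j + k - i) : ℂ) * (1 / 2 * (f / 2) ^ (j + k - i - 1)) *
          (1 - f / 2) ^ (d - j - k)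

lemma QC_eq (d : ℕ) (f : ℂ) : QC d f = f * gC d f := by
  unfold QC gC
  rw [Finset.mul_sum]
  apply Finset.sum_congr rfl
  intro i hi
  rw [mul_left_comm f]
  congr 1
  rw [Finset.mul_sum]
  apply Finset.sum_congr rfl
  intro j hj
  rw [Finset.mul_sum]
  apply Finset.sum_congr rfl
  intro k hk
  rw [Finset.mem_Icc] at hi hj
  obtain ⟨m, hm⟩ : ∃ m, j + k - i = m + 1 := ⟨j + k - i - 1, by omega⟩
  rw [hm, show m + 1 - 1 = m by omega]
  ring

lemma gC_zero (d : ℕ) : gC d 0 = (qd d : ℂ) := by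
  unfold gC qd
  split_ifs with h
  · have : d / 2 = 0 := by omega
    simp [this]
  rw [Finset.sum_eq_single (d / 2), Finset.sum_eq_single (d / 2 + 1), Finset.sum_eq_single 0]
  · rw [show d / 2 + 1 + 0 - d / 2 = 1 by omega]
    have hc := Nat.choose_succ_right_eq d (d / 2)
    have hc' : ((Nat.choose d (d / 2 + 1) : ℂ)) * ((d / 2 : ℕ) + 1) =
      (Nat.choose d (d / 2) : ℂ) * ((d - d / 2 : ℕ) : ℂ) := by exact_mod_cast hc
    obtain ⟨e, he⟩ : ∃ e, d - d / 2 = e + 1 := ⟨d - d / 2 - 1, by omega⟩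
    unfold bw
    rw [show d - (d / 2 + 1) = e by omega]
    rw [he] at hc' ⊢
    push_cast at hc' ⊢
    simp only [Nat.choose_zero_right, Nat.choose_one_right, pow_zero, sub_zero, one_pow, zero_div]
    push_cast
    linear_combination (-(1/3 : ℂ) ^ (d / 2) * (2 / 3) ^ e / 3) * hc'
  · intro k _ hk
    simp [hk]
  · simp
  · intro j hj hne
    rw [Finset.mem_Icc] at hj
    apply Finset.sum_eq_zero
    intro k _
    have : d / 2 + 1 + 0 < j + k := by omega
    have : j + k - d / 2 - 1 ≠ 0 := by omega
    simp [this]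
  · intro h; exfalso; apply h; rw [Finset.mem_Icc]; omega
  · intro i hi hne
    rw [Finset.mem_Icc] at hi
    rw [Finset.sum_eq_zero, mul_zero]
    intro j hj
    rw [Finset.mem_Icc] at hj
    apply Finset.sum_eq_zero
    intro k _
    have : j + k - i - 1 ≠ 0 := by omega
    simp [this]
  · intro h; exfalso; apply h; rw [Finset.mem_Icc]; omega

lemma QC_deriv (d : ℕ) : deriv (QC d) 0 = (qd d : ℂ) := by
  have hg : Differentiable ℂ (gC d) := by unfold gC; fun_prop
  have : HasDerivAt (fun z => z * gC d z) (1 * gC d 0 + 0 * deriv (gC d) 0) 0 :=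
    (hasDerivAt_id (0 : ℂ)).mul (hg 0).hasDerivAt
  rw [show QC d = fun z => z * gC d z from funext (QC_eq d), this.deriv, gC_zero]
  ring

lemma choose_le (d n k : ℕ) (h : n ≤ d) : ‖(Nat.choose n k : ℂ)‖ ≤ 2 ^ d := by
  rw [Complex.norm_natCast]
  calc (Nat.choose n k : ℝ) ≤ ((2 ^ n : ℕ) : ℝ) := by exact_mod_cast Nat.choose_le_two_pow n k
    _ = 2 ^ n := by push_cast; rfl
    _ ≤ 2 ^ d := pow_le_pow_right₀ (by norm_num) h

lemma pow_two_le (w : ℂ) (hw : ‖w‖ ≤ 2) (k d : ℕ) (h : k ≤ d) : ‖w ^ k‖ ≤ 2 ^ d := by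
  rw [norm_pow]
  calc ‖w‖ ^ k ≤ 2 ^ k := by gcongr
    _ ≤ 2 ^ d := pow_le_pow_right₀ (by norm_num) h

lemma pow_one_le (w : ℂ) (hw : ‖w‖ ≤ 1) (k : ℕ) : ‖w ^ k‖ ≤ 1 := by
  rw [norm_pow]; exact pow_le_one₀ (norm_nonneg _) hw

lemma sum_norm_le {s : Finset ℕ} {F : ℕ → ℂ} {c : ℝ} {d : ℕ} (hc : 0 ≤ c) (hs : s.card ≤ d + 1)
    (h : ∀ i ∈ s, ‖F i‖ ≤ c) : ‖∑ i ∈ s, F i‖ ≤ 2 ^ d * c := by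
  refine (norm_sum_le_of_le s h).trans ?_
  rw [Finset.sum_const, nsmul_eq_mul]
  gcongr
  have : s.card ≤ 2 ^ d := hs.trans Nat.lt_two_pow_self
  exact_mod_cast this

lemma QC_bound (d : ℕ) (z : ℂ) (hz : ‖z‖ ≤ 1) : ‖QC d z‖ ≤ 256 ^ d := by
  have n1 : ‖1 - z‖ ≤ 2 := (norm_sub_le _ _).trans (by simp; linarith)
  have n3 : ‖z / 2‖ ≤ 1 := by rw [norm_div]; simp; linarith
  have n2 : ‖1 - z / 2‖ ≤ 2 := (norm_sub_le _ _).trans (by rw [norm_one]; linarith)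
  have n4 : ‖(1 / 3 : ℂ)‖ ≤ 1 := by norm_num
  have n5 : ‖(2 / 3 : ℂ)‖ ≤ 1 := by norm_num
  have : ‖QC d z‖ ≤ 2 ^ d * (2 ^ d * 1 * 1 * (2 ^ d * (2 ^ d *
      (2 ^ d * 1 * 2 ^ d * 2 ^ d * 1 * 2 ^ d)))) := by
    unfold QC
    apply sum_norm_le (by positivity)
    · simp; omega
    intro i hi
    rw [Finset.mem_Icc] at hi
    rw [norm_mul, norm_mul, norm_mul]
    gcongr
    · exact choose_le d d i le_rfl
    · exact pow_one_le _ n4 _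
    · exact pow_one_le _ n5 _
    apply sum_norm_le (by positivity)
    · simp; omega
    intro j hj
    apply sum_norm_le (by positivity)
    · simp; omega
    intro k hk
    rw [norm_mul, norm_mul, norm_mul, norm_mul, norm_mul]
    gcongr
    · exact choose_le d _ _ (by omega)
    · exact pow_one_le _ hz _
    · exact pow_two_le _ n1 _ _ (by omega)
    · exact choose_le d _ _ (by omega)
    · exact pow_one_le _ n3 _
    · exact pow_two_le _ n2 _ _ (by omega)
  refine this.trans (le_of_eq ?_)
  rw [show (256 : ℝ) = 2 ^ 8 by norm_num, ← pow_mul, mul_comm 8 d, pow_mul]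
  ring

/-- Poisson weights -/
noncomputable def pw (lam : ℝ) (d : ℕ) : ℝ := Real.exp (-lam) * lam ^ d / (Nat.factorial d : ℝ)

lemma pw_nonneg {lam : ℝ} (h : 0 ≤ lam) (d : ℕ) : 0 ≤ pw lam d := by unfold pw; positivity

lemma pw_hasSum (lam x : ℝ) : HasSum (fun d => pw lam d * x ^ d)
    (Real.exp (-lam) * Real.exp (lam * x)) := by
  have := (NormedSpace.expSeries_div_hasSum_exp (lam * x)).mul_left (Real.exp (-lam))
  rw [← Real.exp_eq_exp_ℝ] at this
  have e : (fun d => pw lam d * x ^ d) =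
      fun d => Real.exp (-lam) * ((lam * x) ^ d / (Nat.factorial d : ℝ)) := by
    funext d
    unfold pw
    rw [mul_pow]; ring
  rw [e]
  exact this

lemma summ_Q {lam : ℝ} (h : 0 ≤ lam) (f : ℝ) (hf : |f| ≤ 1) :
    Summable (fun d => pw lam d * Q d f) := by
  refine Summable.of_norm_bounded (pw_hasSum lam 256).summable ?_
  intro d
  rw [norm_mul, Real.norm_of_nonneg (pw_nonneg h d)]
  have := QC_bound d f (by simpa using hf)
  rw [QC_ofReal, Complex.norm_real] at this
  exact mul_le_mul_of_nonneg_left this (pw_nonneg h d)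

lemma P_deriv {lam : ℝ} (h : 0 ≤ lam) :
    HasSum (fun d => pw lam d * qd d) (deriv (P lam) 0) := by
  have hb : ∀ (d : ℕ) (w : ℂ), w ∈ Metric.ball (0 : ℂ) 1 →
      ‖(pw lam d : ℂ) * QC d w‖ ≤ pw lam d * 256 ^ d := by
    intro d w hw
    rw [norm_mul, Complex.norm_real, Real.norm_of_nonneg (pw_nonneg h d)]
    exact mul_le_mul_of_nonneg_left (QC_bound d w (by simpa using (mem_ball_zero_iff.1 hw).le))
      (pw_nonneg h d)
  have hd : ∀ d : ℕ, DifferentiableOn ℂ (fun w => (pw lam d : ℂ) * QC d w)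
      (Metric.ball (0 : ℂ) 1) := by
    intro d
    have : Differentiable ℂ (QC d) := by unfold QC; fun_prop
    exact (this.const_mul _).differentiableOn
  have hz : (0 : ℂ) ∈ Metric.ball (0 : ℂ) 1 := by simp
  have hu := (pw_hasSum lam 256).summable
  have h1 := Complex.hasSum_deriv_of_summable_norm hu hd Metric.isOpen_ball hb hz
  have h2 := Complex.differentiableOn_tsum_of_summable_norm hu hd Metric.isOpen_ball hb
  have h3 := (h2.differentiableAt (Metric.isOpen_ball.mem_nhds hz)).hasDerivAt
  have hdd : ∀ d, deriv (fun w => (pw lam d : ℂ) * QC d w) 0 = ((pw lam d * qd d : ℝ) : ℂ) := by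
    intro d
    rw [deriv_const_mul_field, QC_deriv]; push_cast; rfl
  simp only [hdd] at h1
  rw [← Complex.ofReal_zero] at h3
  have h4 := HasDerivAt.real_of_complex h3
  rw [Complex.ofReal_zero] at h4
  have h5 := Complex.hasSum_re h1
  simp only [Complex.ofReal_re] at h5
  have h6 : P lam = fun x : ℝ => (∑' d, (pw lam d : ℂ) * QC d (x : ℂ)).re := by
    funext x
    simp only [QC_ofReal]
    have : (∑' d, (pw lam d : ℂ) * (Q d x : ℂ)) = ((∑' d, pw lam d * Q d x : ℝ) : ℂ) := by
      push_cast; rfl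
    rw [this, Complex.ofReal_re]; rfl
  rw [h6, h4.deriv]
  exact h5

lemma even_bound (n : ℕ) : (2 : ℝ) * ((n + 1) * bw (2 * n) (n + 1)) ≤ 0.683 := by
  have key : ∀ n : ℕ, (2 : ℝ) * ((n + 1) * bw (2 * n) (n + 1)) =
      n * (Nat.centralBinom n) * (2 / 9) ^ n := by
    intro n
    rcases n with _ | n
    · simp [bw]
    have hc := Nat.choose_succ_right_eq (2 * (n + 1)) (n + 1)
    rw [show 2 * (n + 1) - (n + 1) = n + 1 by omega] at hc
    have hc' : ((Nat.choose (2 * (n + 1)) (n + 1 + 1) : ℝ)) * (n + 1 + 1) =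
      (Nat.centralBinom (n + 1)) * (n + 1) := by exact_mod_cast hc
    unfold bw
    rw [show 2 * (n + 1) - (n + 1 + 1) = n by omega,
      show (2 / 9 : ℝ) = (1 / 3) * (2 / 3) by norm_num, mul_pow]
    push_cast
    linear_combination (2 * (1/3 : ℝ) ^ (n + 1 + 1) * (2 / 3) ^ n) * hc'
  rw [key]
  rcases lt_or_ge n 4 with h | h
  · interval_cases n <;> norm_num [Nat.centralBinom, Nat.choose]
  · induction n, h using Nat.le_induction with
    | base => norm_num [Nat.centralBinom, Nat.choose]
    | succ n hn ih =>
      refine le_trans ?_ ih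
      have hc : ((n : ℝ) + 1) * (Nat.centralBinom (n + 1)) = 2 * (2 * n + 1) * Nat.centralBinom n := by
        exact_mod_cast Nat.succ_mul_centralBinom_succ n
      push_cast
      rw [hc, pow_succ]
      have : (0 : ℝ) ≤ Nat.centralBinom n * (2 / 9) ^ n := by positivity
      have hn' : (4 : ℝ) ≤ n := by exact_mod_cast hn
      nlinarith [mul_nonneg this (sub_nonneg.2 hn')]

lemma odd_bound (n : ℕ) : (2 : ℝ) * ((n + 1) * bw (2 * n + 1) (n + 1)) ≤ 1.025 := by
  have key : ∀ n : ℕ, (2 : ℝ) * ((n + 1) * bw (2 * n + 1) (n + 1)) =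
      2 / 3 * (2 * n + 1) * (Nat.centralBinom n) * (2 / 9) ^ n := by
    intro n
    have hc := Nat.add_one_mul_choose_eq (2 * n) n
    have hc' : ((2 * n + 1 : ℝ)) * (Nat.centralBinom n) =
      (Nat.choose (2 * n + 1) (n + 1)) * (n + 1) := by exact_mod_cast hc
    unfold bw
    rw [show 2 * n + 1 - (n + 1) = n by omega,
      show (2 / 9 : ℝ) = (1 / 3) * (2 / 3) by norm_num, mul_pow]
    linear_combination (-2 * (1/3 : ℝ) ^ (n + 1) * (2 / 3) ^ n) * hc'
  rw [key]
  rcases lt_or_ge n 3 with h | h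
  · interval_cases n <;> norm_num [Nat.centralBinom, Nat.choose]
  · induction n, h using Nat.le_induction with
    | base => norm_num [Nat.centralBinom, Nat.choose]
    | succ n hn ih =>
      refine le_trans ?_ ih
      have hc : ((n : ℝ) + 1) * (Nat.centralBinom (n + 1)) = 2 * (2 * n + 1) * Nat.centralBinom n := by
        exact_mod_cast Nat.succ_mul_centralBinom_succ n
      have hn' : (3 : ℝ) ≤ n := by exact_mod_cast hn
      have hC : (Nat.centralBinom (n + 1) : ℝ) = 2 * (2 * n + 1) * Nat.centralBinom n / (n + 1) := by
        rw [eq_div_iff (by positivity), ← hc]; ring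
      have : (0 : ℝ) ≤ (2 * n + 1) * Nat.centralBinom n * (2 / 9) ^ n := by positivity
      have h9 : 4 * (2 * (n : ℝ) + 3) / (9 * (n + 1)) ≤ 1 := by
        rw [div_le_one (by positivity)]; linarith
      calc _ = 2 / 3 * ((2 * n + 1) * Nat.centralBinom n * (2 / 9) ^ n)
            * (4 * (2 * (n : ℝ) + 3) / (9 * (n + 1))) := by
            rw [hC]; push_cast; field_simp; ring
        _ ≤ 2 / 3 * ((2 * n + 1) * Nat.centralBinom n * (2 / 9) ^ n) * 1 := by gcongr
        _ = _ := by ring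

lemma qd_bound (d : ℕ) : 2 * qd d ≤ 0.854 - 0.171 * (-1) ^ d := by
  unfold qd
  split_ifs with h
  · interval_cases d <;> norm_num
  · rcases Nat.even_or_odd' d with ⟨n, rfl | rfl⟩
    · rw [show 2 * n / 2 = n by omega, pow_mul]
      have := even_bound n
      norm_num at this ⊢
      linarith
    · rw [show (2 * n + 1) / 2 = n by omega, pow_succ, pow_mul]
      have := odd_bound n
      norm_num at this ⊢
      linarith

/-- For any `λ ≥ 0` and `f ∈ [0, 1/3]`, we have `2·P_λ(f) ≤ 2·P_λ'(0)·f ≤ 0.9999·f`. -/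
theorem two_P_le (lam : ℝ) (hlam : 0 ≤ lam) (f : ℝ) (hf : f ∈ Set.Icc (0 : ℝ) (1 / 3)) :
    2 * P lam f ≤ 2 * deriv (P lam) 0 * f ∧ 2 * deriv (P lam) 0 * f ≤ 0.9999 * f := by
  obtain ⟨h0, h1⟩ := hf
  have hS := P_deriv hlam
  constructor
  · have : P lam f ≤ deriv (P lam) 0 * f := by
      refine hasSum_le ?_ (summ_Q hlam f (by rw [abs_of_nonneg h0]; linarith)).hasSum
        (hS.mul_right f)
      intro d
      rw [mul_assoc]
      exact mul_le_mul_of_nonneg_left (Q_le h0 (by linarith) d) (pw_nonneg hlam d)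
    linarith
  · apply mul_le_mul_of_nonneg_right _ h0
    have hA := ((pw_hasSum lam 1).mul_left 0.854).sub ((pw_hasSum lam (-1)).mul_left 0.171)
    have := hasSum_le (fun d => ?_) (hS.mul_left 2) hA
    · rw [mul_one, ← Real.exp_add, neg_add_cancel, Real.exp_zero] at this
      have hp : 0 ≤ Real.exp (-lam) * Real.exp (lam * (-1)) := by positivity
      linarith
    · have := mul_le_mul_of_nonneg_left (qd_bound d) (pw_nonneg hlam d)
      rw [one_pow]
      linarith
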